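/- Assume n-wid(_R R) ≤ k. A right R-module M is reduced and (n,k)-weak cotorsion if and only if M is the kernel of a WF^n_k(R^op)-cover φ : N → D with N injective. -/

import Mathlib

/-!
Common definitions for formalizing "(n,k)-weak cotorsion modules" over an arbitrary
(not necessarily commutative) ring `R`.  Left `R`-modules are objects of
`ModuleCat R`, right `R`-modules are objects of `ModuleCat Rᵐᵒᵖ`.

Since Mathlib does not provide `Tor` of a right module with a left module over a
noncommutative ring, we encode the vanishing of `Tor_i^R(N, M)` (for `N` a right
module and `M` a left module) by the equivalent condition
`Ext^i_{Rᵐᵒᵖ}(N, M⋆) = 0`, where `M⋆ = Hom_ℤ(M, ℚ/ℤ)` is the character module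
(a right module).  This is equivalent because `ℚ/ℤ` is an injective cogenerator:
`Ext^i_{Rᵐᵒᵖ}(N, M⋆) ≅ (Tor_i^R(N, M))⋆`, and an abelian group vanishes iff its
character group does.
-/

open CategoryTheory

universe u

noncomputable section

/-- The character group `Hom_ℤ(N, ℚ/ℤ)`. -/
def CharGroup (N : Type u) [AddCommGroup N] : Type u := N →+ AddCircle (1 : ℚ)

instance (N : Type u) [AddCommGroup N] : AddCommGroup (CharGroup N) :=
  inferInstanceAs (AddCommGroup (N →+ AddCircle (1 : ℚ)))

namespace CharGroup

variable {N : Type u} [AddCommGroup N]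

/-- View an element of the character group as an additive monoid hom. -/
def toHom (f : CharGroup N) : N →+ AddCircle (1 : ℚ) := f

/-- Build an element of the character group from an additive monoid hom. -/
def ofHom (f : N →+ AddCircle (1 : ℚ)) : CharGroup N := f

theorem hom_ext {f g : CharGroup N} (h : ∀ m, toHom f m = toHom g m) : f = g :=
  AddMonoidHom.ext h

end CharGroup

open CharGroup in
/-- Left module structure on the character group of a right module. -/
instance charGroupModuleLeft (R : Type u) [Ring R] (N : Type u) [AddCommGroup N]
    [Module Rᵐᵒᵖ N] : Module R (CharGroup N) where
  smul r f := ofHom ((toHom f).comp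
    (AddMonoidHom.mk' (fun m => MulOpposite.op r • m) (fun a b => smul_add _ a b)))
  one_smul f := hom_ext fun m => by
    show toHom f (MulOpposite.op (1 : R) • m) = toHom f m
    rw [MulOpposite.op_one, one_smul]
  mul_smul r s f := hom_ext fun m => by
    show toHom f (MulOpposite.op (r * s) • m)
      = toHom f (MulOpposite.op s • MulOpposite.op r • m)
    rw [MulOpposite.op_mul, mul_smul]
  smul_zero r := CharGroup.hom_ext fun m => rfl
  smul_add r f g := CharGroup.hom_ext fun m => rfl
  add_smul r s f := hom_ext fun m => by
    show toHom f (MulOpposite.op (r + s) • m)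
      = toHom f (MulOpposite.op r • m) + toHom f (MulOpposite.op s • m)
    rw [MulOpposite.op_add, add_smul, map_add]
  zero_smul f := hom_ext fun m => by
    show toHom f (MulOpposite.op (0 : R) • m) = 0
    rw [MulOpposite.op_zero, zero_smul, map_zero]

open CharGroup in
/-- Right module structure on the character group of a left module. -/
instance charGroupModuleRight (R : Type u) [Ring R] (N : Type u) [AddCommGroup N]
    [Module R N] : Module Rᵐᵒᵖ (CharGroup N) where
  smul r f := ofHom ((toHom f).comp
    (AddMonoidHom.mk' (fun m => r.unop • m) (fun a b => smul_add _ a b)))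
  one_smul f := hom_ext fun m => by
    show toHom f ((1 : Rᵐᵒᵖ).unop • m) = toHom f m
    rw [MulOpposite.unop_one, one_smul]
  mul_smul r s f := hom_ext fun m => by
    show toHom f ((r * s).unop • m) = toHom f (s.unop • r.unop • m)
    rw [MulOpposite.unop_mul, mul_smul]
  smul_zero r := CharGroup.hom_ext fun m => rfl
  smul_add r f g := CharGroup.hom_ext fun m => rfl
  add_smul r s f := hom_ext fun m => by
    show toHom f ((r + s).unop • m) = toHom f (r.unop • m) + toHom f (s.unop • m)
    rw [MulOpposite.unop_add, add_smul, map_add]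
  zero_smul f := hom_ext fun m => by
    show toHom f ((0 : Rᵐᵒᵖ).unop • m) = 0
    rw [MulOpposite.unop_zero, zero_smul, map_zero]

variable (R : Type u) [Ring R]

/-- `extVanish S i A B` says that `Ext^i_S(A, B) = 0`. -/
def extVanish (S : Type u) [Ring S] (i : ℕ) (A B : ModuleCat.{u} S) : Prop :=
  Subsingleton (((Ext ℤ (ModuleCat.{u} S) i).obj (Opposite.op A)).obj B)

/-- The character module of a right `R`-module, as a left `R`-module. -/
def charLeft (N : ModuleCat.{u} Rᵐᵒᵖ) : ModuleCat.{u} R :=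
  ModuleCat.of R (CharGroup N)

/-- The character module of a left `R`-module, as a right `R`-module. -/
def charRight (M : ModuleCat.{u} R) : ModuleCat.{u} Rᵐᵒᵖ :=
  ModuleCat.of Rᵐᵒᵖ (CharGroup M)

/-- `torVanish R i N M` encodes `Tor_i^R(N, M) = 0` for a right module `N` and a
left module `M`, via the character module duality
`Ext^i_R(M, N⋆) ≅ (Tor_i^R(N, M))⋆`. -/
def torVanish (i : ℕ) (N : ModuleCat.{u} Rᵐᵒᵖ) (M : ModuleCat.{u} R) : Prop :=
  extVanish R i M (charLeft R N)

/-- `K` is a special super finitely presented `S`-module (for the parameter `n`):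
`K` is the image of `F_n → F_{n-1}` in a projective resolution
`⋯ → F_{n+1} → F_n → ⋯ → F_0 → U → 0` of some module `U` in which `F_i` is finitely
generated projective for all `i ≥ n`.  (For `n = 0` the distinguished module is `U`
itself, matching `Ext^{n+1}(U, -) ≅ Ext^1(K_{n-1}, -)`.) -/
def IsSpecialSFP (S : Type u) [Ring S] (n : ℕ) (K : ModuleCat.{u} S) : Prop :=
  ∃ (U : ModuleCat.{u} S) (F : ℕ → ModuleCat.{u} S)
    (d : ∀ i, F (i + 1) →ₗ[S] F i) (π : F 0 →ₗ[S] U),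
      (∀ i, Module.Projective S (F i)) ∧
      (∀ i, n ≤ i → Module.Finite S (F i)) ∧
      Function.Surjective π ∧ Function.Exact (d 0) π ∧
      (∀ i, Function.Exact (d (i + 1)) (d i)) ∧
      (if n = 0 then Nonempty ((K : Type u) ≃ₗ[S] U)
       else Nonempty ((K : Type u) ≃ₗ[S] LinearMap.range (d (n - 1))))

/-- The `n`-weak injective dimension of a left `S`-module `M` is at most `k`. -/
def nwidLE (S : Type u) [Ring S] (n k : ℕ) (M : ModuleCat.{u} S) : Prop :=
  ∀ K : ModuleCat.{u} S, IsSpecialSFP S n K → extVanish S (k + 1) K M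

/-- The `n`-weak flat dimension of a right `R`-module `N` is at most `k`:
`Tor_{k+1}^R(N, K) = 0` for every special super finitely presented left module `K`. -/
def nwfdLE (n k : ℕ) (N : ModuleCat.{u} Rᵐᵒᵖ) : Prop :=
  ∀ K : ModuleCat.{u} R, IsSpecialSFP R n K → torVanish R (k + 1) N K

/-- A right `R`-module `M` is `(n,k)`-weak cotorsion if `Ext^1(N, M) = 0` for every
right module `N` of `n`-weak flat dimension at most `k`. -/
def IsNKWeakCotorsion (n k : ℕ) (M : ModuleCat.{u} Rᵐᵒᵖ) : Prop :=
  ∀ N : ModuleCat.{u} Rᵐᵒᵖ, nwfdLE R n k N → extVanish Rᵐᵒᵖ 1 N M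

/-- Projective dimension at most `k`, via Ext vanishing. -/
def pdLE (S : Type u) [Ring S] (k : ℕ) (K : ModuleCat.{u} S) : Prop :=
  ∀ M : ModuleCat.{u} S, extVanish S (k + 1) K M

/-- Injective dimension at most `k`, via Ext vanishing. -/
def idLE (S : Type u) [Ring S] (k : ℕ) (M : ModuleCat.{u} S) : Prop :=
  ∀ N : ModuleCat.{u} S, extVanish S (k + 1) N M

/-- Flat dimension of a right module at most `k`, via Tor vanishing. -/
def fdLE (k : ℕ) (N : ModuleCat.{u} Rᵐᵒᵖ) : Prop :=
  ∀ A : ModuleCat.{u} R, torVanish R (k + 1) N A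

/-- `l.n.sp.gldim(R) ≤ k` : every special super finitely presented left module has
projective dimension at most `k`. -/
def lnspGldimLE (n k : ℕ) : Prop :=
  ∀ K : ModuleCat.{u} R, IsSpecialSFP R n K → pdLE R k K

/-- `w.gl.dim(R) ≤ k`. -/
def wGldimLE (k : ℕ) : Prop :=
  ∀ N : ModuleCat.{u} Rᵐᵒᵖ, fdLE R k N

/-- A right `R`-module `M` is `k`-cotorsion if `Ext^1(F, M) = 0` for every right
module `F` of flat dimension at most `k`. -/
def IsKCotorsion (k : ℕ) (M : ModuleCat.{u} Rᵐᵒᵖ) : Prop :=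
  ∀ F : ModuleCat.{u} Rᵐᵒᵖ, fdLE R k F → extVanish Rᵐᵒᵖ 1 F M

/-- `φ : E → D` is a `𝒞`-precover of `D`. -/
def IsPrecover (S : Type u) [Ring S] (𝒞 : ModuleCat.{u} S → Prop)
    (E D : ModuleCat.{u} S) (φ : E →ₗ[S] D) : Prop :=
  𝒞 E ∧ ∀ F : ModuleCat.{u} S, 𝒞 F → ∀ g : F →ₗ[S] D, ∃ h : F →ₗ[S] E, φ ∘ₗ h = g

/-- `φ : E → D` is a `𝒞`-cover of `D`. -/
def IsCover (S : Type u) [Ring S] (𝒞 : ModuleCat.{u} S → Prop)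
    (E D : ModuleCat.{u} S) (φ : E →ₗ[S] D) : Prop :=
  IsPrecover S 𝒞 E D φ ∧ ∀ g : E →ₗ[S] E, φ ∘ₗ g = φ → Function.Bijective g

/-- `f : X → F` is a `𝒞`-preenvelope of `X`. -/
def IsPreenvelope (S : Type u) [Ring S] (𝒞 : ModuleCat.{u} S → Prop)
    (X F : ModuleCat.{u} S) (f : X →ₗ[S] F) : Prop :=
  𝒞 F ∧ ∀ F' : ModuleCat.{u} S, 𝒞 F' → ∀ g : X →ₗ[S] F', ∃ h : F →ₗ[S] F', h ∘ₗ f = g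

/-- A module is reduced if it has no nonzero injective submodules. -/
def IsReducedModule (S : Type u) [Ring S] (M : ModuleCat.{u} S) : Prop :=
  ∀ N : Submodule S M, Module.Injective S N → N = ⊥

/-- `D` is an `m`-th cosyzygy of `M`: there is an exact sequence
`0 → M → E^0 → ⋯ → E^{m-1} → D → 0` with each `E^i` injective. -/
def IsCosyzygy (S : Type u) [Ring S] : ℕ → ModuleCat.{u} S → ModuleCat.{u} S → Prop
  | 0, M, D => Nonempty ((M : Type u) ≃ₗ[S] D)
  | m + 1, M, D => ∃ (C E : ModuleCat.{u} S), IsCosyzygy S m M C ∧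
      Module.Injective S E ∧
      ∃ (ι : C →ₗ[S] E) (p : E →ₗ[S] D),
        Function.Injective ι ∧ Function.Surjective p ∧ Function.Exact ι p


/-- A left `R`-module `F` is flat: `Tor_1(A, F) = 0` for every right module `A`
(encoded via character duality, as above). -/
def IsFlatModule (R : Type u) [Ring R] (F : ModuleCat.{u} R) : Prop :=
  ∀ A : ModuleCat.{u} Rᵐᵒᵖ, torVanish R 1 A F

end

theorem extVanish_iff {S : Type u} [Ring S] {A B : ModuleCat.{u} S} (P : ProjectiveResolution A)
    (i : ℕ) : extVanish S (i + 1) A B ↔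
    ∀ f : P.complex.X (i + 1) ⟶ B, P.complex.d (i + 2) (i + 1) ≫ f = 0 →
      ∃ g : P.complex.X i ⟶ B, P.complex.d (i + 1) i ≫ g = f := by
  unfold extVanish
  rw [← ModuleCat.isZero_iff_subsingleton, (P.isoExt (R := ℤ) (i + 1) B).isZero_iff,
    ← HomologicalComplex.exactAt_iff_isZero_homology,
    HomologicalComplex.exactAt_iff' _ i (i + 1) (i + 2) (by simp) (by simp),
    ShortComplex.moduleCat_exact_iff]
  rfl

theorem resolution_of {S : Type u} [Ring S] {A : ModuleCat.{u} S} (G : ℕ → ModuleCat.{u} S)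
    (d : ∀ i, G (i + 1) →ₗ[S] G i) (π : G 0 →ₗ[S] A) (hP : ∀ i, Module.Projective S (G i))
    (hπ : Function.Surjective π) (h0 : Function.Exact (d 0) π)
    (hd : ∀ i, Function.Exact (d (i + 1)) (d i)) (B : ModuleCat.{u} S) (i : ℕ) :
    extVanish S (i + 1) A B ↔ ∀ f : G (i + 1) →ₗ[S] B, f ∘ₗ d (i + 1) = 0 →
      ∃ g : G i →ₗ[S] B, g ∘ₗ d i = f := by
  have hsq : ∀ n, ModuleCat.ofHom (d (n + 1)) ≫ ModuleCat.ofHom (d n) = 0 := fun n => by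
    ext x; exact (hd n).apply_apply_eq_zero x
  let C : ChainComplex (ModuleCat.{u} S) ℕ := ChainComplex.of G (fun n => ModuleCat.ofHom (d n)) hsq
  have hC : ∀ n, C.d (n + 1) n = ModuleCat.ofHom (d n) := fun n =>
    ChainComplex.of_d G (fun n => ModuleCat.ofHom (d n)) n
  have hz : C.d 1 0 ≫ ModuleCat.ofHom π = 0 := by
    rw [hC 0]; ext x; exact h0.apply_apply_eq_zero x
  have hex : ∀ n, C.ExactAt (n + 1) := fun n => by
    rw [HomologicalComplex.exactAt_iff' _ (n + 1 + 1) (n + 1) n (by simp) (by simp),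
      ShortComplex.moduleCat_exact_iff]
    intro x hx
    change (C.d (n + 1) n) x = 0 at hx
    change ∃ y, (C.d (n + 1 + 1) (n + 1)) y = x
    rw [hC] at hx ⊢
    exact (hd n x).1 hx
  let P : ProjectiveResolution A :=
    { complex := C
      projective := fun n => by
        have := hP n
        exact (IsProjective.iff_projective (R := S) (G n)).1 this
      π := (ChainComplex.toSingle₀Equiv _ _).symm ⟨ModuleCat.ofHom π, hz⟩
      quasiIso := ⟨fun n => by
        cases n
        · rw [ChainComplex.quasiIsoAt₀_iff, ShortComplex.quasiIso_iff_of_zeros']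
          · refine ⟨?_, ?_⟩
            · rw [ShortComplex.moduleCat_exact_iff]
              intro x hx
              have hx' : π x = 0 := by
                have e : ((ChainComplex.toSingle₀Equiv C A).symm ⟨ModuleCat.ofHom π, hz⟩).f 0
                  = ModuleCat.ofHom π := by simp
                have := congrArg (fun q => q x) e
                exact this.symm.trans hx
              obtain ⟨y, hy⟩ := (h0 x).1 hx'
              refine ⟨y, ?_⟩
              change (C.d 1 0) y = x
              rw [hC 0]; exact hy
            · rw [ModuleCat.epi_iff_surjective]
              intro y
              obtain ⟨x, hx⟩ := hπ y
              refine ⟨x, ?_⟩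
              have e : ((ChainComplex.toSingle₀Equiv C A).symm ⟨ModuleCat.ofHom π, hz⟩).f 0
                  = ModuleCat.ofHom π := by simp
              have := congrArg (fun q => q x) e
              exact this.trans hx
          all_goals rfl
        · rw [quasiIsoAt_iff_exactAt']
          · apply hex
          · apply ChainComplex.exactAt_succ_single_obj⟩ }
  rw [extVanish_iff P i]
  change (∀ f : G (i + 1) ⟶ B, C.d (i + 1 + 1) (i + 1) ≫ f = 0 →
      ∃ g : G i ⟶ B, C.d (i + 1) i ≫ g = f) ↔ _
  rw [hC, hC]
  constructor
  · intro H f hf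
    obtain ⟨g, hg⟩ := H (ModuleCat.ofHom f) (by ext x; exact DFunLike.congr_fun hf x)
    exact ⟨g.hom, by ext x; exact congrArg (fun q => q.hom x) hg⟩
  · intro H f hf
    obtain ⟨g, hg⟩ := H f.hom (by ext x; exact congrArg (fun q => q.hom x) hf)
    exact ⟨ModuleCat.ofHom g, by ext x; exact DFunLike.congr_fun hg x⟩

theorem exists_factor {S X Y N : Type*} [Ring S] [AddCommGroup X] [AddCommGroup Y] [AddCommGroup N]
    [Module S X] [Module S Y] [Module S N] (hN : Module.Baer S N) (β : X →ₗ[S] Y) (χ : X →ₗ[S] N)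
    (hk : ∀ x, β x = 0 → χ x = 0) : ∃ χ' : Y →ₗ[S] N, χ' ∘ₗ β = χ := by
  have hk' : LinearMap.ker β ≤ LinearMap.ker χ := fun x hx => hk x hx
  obtain ⟨h, hh⟩ := hN.extension_property ((LinearMap.ker β).liftQ β le_rfl)
    (LinearMap.ker_eq_bot.1 (Submodule.ker_liftQ_eq_bot _ _ _ le_rfl))
    ((LinearMap.ker β).liftQ χ hk')
  refine ⟨h, ?_⟩
  ext x
  simpa using DFunLike.congr_fun hh ((LinearMap.ker β).mkQ x)

theorem exists_descend {S X Y N : Type*} [Ring S] [AddCommGroup X] [AddCommGroup Y]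
    [AddCommGroup N] [Module S X] [Module S Y] [Module S N] (π : X →ₗ[S] Y)
    (hπ : Function.Surjective π) (t : X →ₗ[S] N)
    (hk : ∀ x, π x = 0 → t x = 0) : ∃ h : Y →ₗ[S] N, h ∘ₗ π = t := by
  have hk' : LinearMap.ker π ≤ LinearMap.ker t := fun x hx => hk x hx
  refine ⟨(LinearMap.ker π).liftQ t hk' ∘ₗ (π.quotKerEquivOfSurjective hπ).symm.toLinearMap, ?_⟩
  ext x
  have : (π.quotKerEquivOfSurjective hπ).symm (π x) = (LinearMap.ker π).mkQ x := by
    rw [LinearEquiv.symm_apply_eq]; rfl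
  simp [this]

theorem exists_res {S : Type u} [Ring S] (A : ModuleCat.{u} S) :
    ∃ (G : ℕ → ModuleCat.{u} S) (d : ∀ i, G (i + 1) →ₗ[S] G i) (π : G 0 →ₗ[S] A),
      (∀ i, Module.Projective S (G i)) ∧ Function.Surjective π ∧ Function.Exact (d 0) π ∧
      (∀ i, Function.Exact (d (i + 1)) (d i)) := by
  let P := ProjectiveResolution.of A
  refine ⟨fun i => P.complex.X i, fun i => (P.complex.d (i + 1) i).hom, (P.π.f 0).hom, ?_, ?_, ?_, ?_⟩
  · intro i
    exact (IsProjective.iff_projective (R := S) (P.complex.X i)).2 (P.projective i)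
  · have : Epi (P.π.f 0) := inferInstance
    exact (ModuleCat.epi_iff_surjective _).1 this
  · exact (ShortComplex.ShortExact.moduleCat_exact_iff_function_exact _).1 P.exact₀
  · intro i
    exact (ShortComplex.ShortExact.moduleCat_exact_iff_function_exact _).1 (P.exact_succ i)

theorem ext1_lift {S : Type u} [Ring S] {F M : ModuleCat.{u} S} (hF : extVanish S 1 F M)
    {E D : Type u} [AddCommGroup E] [AddCommGroup D] [Module S E] [Module S D]
    (ι : M →ₗ[S] E) (ψ : E →ₗ[S] D) (hι : Function.Injective ι) (hψ : Function.Surjective ψ)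
    (hex : Function.Exact ι ψ) (s : F →ₗ[S] D) : ∃ h : F →ₗ[S] E, ψ ∘ₗ h = s := by
  obtain ⟨G, d, π, hP, hπ, h0, hd⟩ := exists_res F
  have := hP 0
  obtain ⟨t, ht⟩ := Module.projective_lifting_property ψ (s ∘ₗ π) hψ
  have ht' : ∀ x, ψ (t x) = s (π x) := fun x => DFunLike.congr_fun ht x
  have hr : ∀ x, (t ∘ₗ d 0) x ∈ LinearMap.range ι := fun x => by
    refine (hex _).1 ?_
    simp [ht', h0.apply_apply_eq_zero]
  let e := LinearEquiv.ofInjective ι hι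
  let f : G 1 →ₗ[S] M := e.symm.toLinearMap ∘ₗ (t ∘ₗ d 0).codRestrict _ hr
  have hf : ∀ x, ι (f x) = t (d 0 x) := fun x => by
    have : e (f x) = (t ∘ₗ d 0).codRestrict _ hr x := by simp [f]
    exact congrArg Subtype.val this
  obtain ⟨g, hg⟩ := (resolution_of G d π hP hπ h0 hd M 0).1 hF f (by
    ext x
    apply hι
    simp [hf, (hd 0).apply_apply_eq_zero])
  have hg' : ∀ x, g (d 0 x) = f x := fun x => DFunLike.congr_fun hg x
  obtain ⟨h, hh⟩ := exists_descend π hπ (t - ι ∘ₗ g) (by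
    intro x hx
    obtain ⟨y, rfl⟩ := (h0 x).1 hx
    simp [hg', hf])
  refine ⟨h, ?_⟩
  ext y
  obtain ⟨x, rfl⟩ := hπ y
  have h1 : h (π x) = t x - ι (g x) := DFunLike.congr_fun hh x
  simp [h1, ht', hex.apply_apply_eq_zero]

theorem ext1_of {S : Type u} [Ring S] {F M E D : ModuleCat.{u} S} (hE : Module.Injective S E)
    (φ : E →ₗ[S] D) (e : M ≃ₗ[S] LinearMap.ker φ)
    (hl : ∀ s : F →ₗ[S] D, ∃ h : F →ₗ[S] E, φ ∘ₗ h = s) : extVanish S 1 F M := by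
  obtain ⟨G, d, π, hP, hπ, h0, hd⟩ := exists_res F
  refine (resolution_of G d π hP hπ h0 hd M 0).2 fun f hf => ?_
  have hf' : ∀ x, f (d 1 x) = 0 := fun x => DFunLike.congr_fun hf x
  obtain ⟨t, ht⟩ := exists_factor (Module.Baer.of_injective hE) (d 0)
    ((LinearMap.ker φ).subtype ∘ₗ e.toLinearMap ∘ₗ f) (by
      intro x hx
      obtain ⟨y, rfl⟩ := (hd 0 x).1 hx
      simp [hf'])
  have ht' : ∀ x, t (d 0 x) = (e (f x) : E) := fun x => DFunLike.congr_fun ht x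
  obtain ⟨s, hs⟩ := exists_descend π hπ (φ ∘ₗ t) (by
    intro x hx
    obtain ⟨y, rfl⟩ := (h0 x).1 hx
    have := (e (f y)).2
    rw [LinearMap.mem_ker] at this
    simp [ht', this])
  obtain ⟨h, hh⟩ := hl s
  have hz : ∀ x, (t - h ∘ₗ π) x ∈ LinearMap.ker φ := fun x => by
    have h1 : φ (h (π x)) = s (π x) := DFunLike.congr_fun hh _
    have h2 : s (π x) = φ (t x) := DFunLike.congr_fun hs _
    simp [h1, h2]
  refine ⟨e.symm.toLinearMap ∘ₗ (t - h ∘ₗ π).codRestrict _ hz, ?_⟩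
  ext x
  simp only [LinearMap.comp_apply, LinearEquiv.coe_coe]
  rw [LinearEquiv.symm_apply_eq]
  ext
  simp [ht', h0.apply_apply_eq_zero]

theorem special_res {S : Type u} [Ring S] {n : ℕ} {K : ModuleCat.{u} S} (hK : IsSpecialSFP S n K) :
    ∃ (G : ℕ → ModuleCat.{u} S) (d : ∀ i, G (i + 1) →ₗ[S] G i) (π : G 0 →ₗ[S] K),
      (∀ i, Module.Projective S (G i)) ∧ (∀ i, Module.Finite S (G i)) ∧
      Function.Surjective π ∧ Function.Exact (d 0) π ∧
      (∀ i, Function.Exact (d (i + 1)) (d i)) := by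
  obtain ⟨U, F, d, π, hP, hF, hπ, h0, hd, hK⟩ := hK
  cases n with
  | zero =>
    obtain ⟨e⟩ : Nonempty ((K : Type u) ≃ₗ[S] U) := by simpa using hK
    refine ⟨F, d, e.symm.toLinearMap ∘ₗ π, hP, fun i => hF i (Nat.zero_le _), ?_, ?_, hd⟩
    · exact e.symm.surjective.comp hπ
    · intro x
      simpa using h0 x
  | succ n =>
    obtain ⟨e⟩ : Nonempty ((K : Type u) ≃ₗ[S] LinearMap.range (d n)) := by simpa using hK
    refine ⟨fun i => F (n + 1 + i), fun i => d (n + 1 + i),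
      e.symm.toLinearMap ∘ₗ (d n).rangeRestrict, fun i => hP _, fun i => hF _ (by omega), ?_, ?_,
      fun i => hd _⟩
    · exact e.symm.surjective.comp (d n).surjective_rangeRestrict
    · intro x
      rw [← hd n x]
      simp only [LinearMap.comp_apply, LinearEquiv.coe_coe, LinearEquiv.map_eq_zero_iff]
      exact Subtype.ext_iff

theorem exists_dual {R P : Type*} [Ring R] [AddCommGroup P] [Module R P] [Module.Finite R P]
    [Module.Projective R P] : ∃ (m : ℕ) (p : Fin m → P) (l : Fin m → (P →ₗ[R] R)),
      ∀ x, ∑ i, l i x • p i = x := by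
  obtain ⟨m, f, g, -, -, hfg⟩ := Module.Finite.exists_comp_eq_id_of_projective R P
  refine ⟨m, fun i => f (Pi.single i 1), fun i => LinearMap.proj i ∘ₗ g, fun x => ?_⟩
  have : f (g x) = x := DFunLike.congr_fun hfg x
  conv_rhs => rw [← this, pi_eq_sum_univ' (g x), map_sum]
  refine Finset.sum_congr rfl fun i _ => ?_
  rw [map_smul]
  simp only [LinearMap.comp_apply, LinearMap.proj_apply]

/-- elementary map `l ↦ e l(c)`. -/
def elemHom {R C E : Type u} [Ring R] [AddCommGroup C] [Module R C] [AddCommGroup E] [Module Rᵐᵒᵖ E]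
    (c : C) (e : E) : (C →ₗ[R] R) →ₗ[Rᵐᵒᵖ] E where
  toFun l := MulOpposite.op (l c) • e
  map_add' l l' := by simp [add_smul]
  map_smul' r l := by simp [mul_smul]

/-- precomposition on duals. -/
def preDual {R B C : Type u} [Ring R] [AddCommGroup C] [Module R C] [AddCommGroup B] [Module R B]
    (b : B →ₗ[R] C) : (C →ₗ[R] R) →ₗ[Rᵐᵒᵖ] (B →ₗ[R] R) where
  toFun l := l ∘ₗ b
  map_add' l l' := rfl
  map_smul' r l := rfl

theorem key {R A B C E : Type u} [Ring R] [AddCommGroup A] [AddCommGroup B] [AddCommGroup C]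
    [Module R A] [Module R B] [Module R C] [AddCommGroup E] [Module Rᵐᵒᵖ E]
    [Module.Finite R A] [Module.Projective R A] [Module.Finite R B] [Module.Projective R B]
    (hE : Module.Injective Rᵐᵒᵖ E) (a : A →ₗ[R] B) (b : B →ₗ[R] C)
    (hR : ∀ f : B →ₗ[R] R, f ∘ₗ a = 0 → ∃ g : C →ₗ[R] R, g ∘ₗ b = f)
    (f : B →ₗ[R] CharGroup E) (hf : f ∘ₗ a = 0) : ∃ g : C →ₗ[R] CharGroup E, g ∘ₗ b = f := by
  obtain ⟨m, p, l, hp⟩ := exists_dual (R := R) (P := B)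
  obtain ⟨m', q, u, hq⟩ := exists_dual (R := R) (P := A)
  have hsm : ∀ (r : R) (x : CharGroup E) (e : E), CharGroup.toHom (r • x) e =
      CharGroup.toHom x (MulOpposite.op r • e) := fun _ _ _ => rfl
  let th : CharGroup E →+ (E →+ AddCircle (1 : ℚ)) := ⟨⟨CharGroup.toHom, rfl⟩, fun _ _ => rfl⟩
  have hth : ∀ x, CharGroup.toHom x = th x := fun _ => rfl
  have hsum : ∀ (x : B) (e : E),
      ∑ i, CharGroup.toHom (f (p i)) (MulOpposite.op (l i x) • e) = CharGroup.toHom (f x) e := by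
    intro x e
    conv_rhs => rw [← hp x, map_sum, hth, map_sum, AddMonoidHom.finsetSum_apply]
    refine Finset.sum_congr rfl fun i _ => ?_
    rw [f.map_smul, ← hth, hsm]
  let χ : ((B →ₗ[R] R) →ₗ[Rᵐᵒᵖ] E) →+ AddCircle (1 : ℚ) :=
    { toFun := fun h => ∑ i, CharGroup.toHom (f (p i)) (h (l i))
      map_zero' := by simp
      map_add' := fun x y => by simp [Finset.sum_add_distrib] }
  let β : ((B →ₗ[R] R) →ₗ[Rᵐᵒᵖ] E) →+ ((C →ₗ[R] R) →ₗ[Rᵐᵒᵖ] E) :=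
    { toFun := fun h => h ∘ₗ preDual b
      map_zero' := rfl
      map_add' := fun x y => rfl }
  have hker : ∀ h, β h = 0 → χ h = 0 := by
    intro h hh
    obtain ⟨h', hh'⟩ := exists_factor (Module.Baer.of_injective hE) (preDual a) h (by
      intro x hx
      obtain ⟨g, rfl⟩ := hR x hx
      exact DFunLike.congr_fun hh g)
    have e1 : ∀ x, h x = ∑ j, MulOpposite.op (x (a (q j))) • h' (u j) := by
      intro x
      rw [← hh']
      simp only [LinearMap.comp_apply, ← map_smul, ← map_sum]
      congr 1
      ext y
      change x (a y) = _
      rw [LinearMap.sum_apply]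
      conv_lhs => rw [← hq y]
      simp
    change ∑ i, CharGroup.toHom (f (p i)) (h (l i)) = 0
    simp only [e1, map_sum]
    rw [Finset.sum_comm]
    refine Finset.sum_eq_zero fun j _ => ?_
    rw [hsum]
    have : f (a (q j)) = 0 := DFunLike.congr_fun hf _
    rw [this]; rfl
  obtain ⟨χ', hχ'⟩ := exists_factor (S := ℤ) (N := AddCircle (1 : ℚ)) (Module.Baer.of_divisible _)
    β.toIntLinearMap χ.toIntLinearMap hker
  have hχ : ∀ h, χ' (β h) = χ h := fun h => DFunLike.congr_fun hχ' h
  refine ⟨{ toFun := fun c => CharGroup.ofHom (AddMonoidHom.mk' (fun e => χ' (elemHom c e)) ?_)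
            map_add' := ?_
            map_smul' := ?_ }, ?_⟩
  · intro e e'
    rw [← map_add]; congr 1
    ext x; simp [elemHom]
  · intro c c'
    refine CharGroup.hom_ext fun e => ?_
    change χ' (elemHom (c + c') e) = χ' (elemHom c e) + χ' (elemHom c' e)
    rw [← map_add]; congr 1
    ext x; simp [elemHom, add_smul]
  · intro r c
    refine CharGroup.hom_ext fun e => ?_
    change χ' (elemHom (r • c) e) = χ' (elemHom c (MulOpposite.op r • e))
    congr 1
    ext x; simp [elemHom, mul_smul]
  · ext x
    refine CharGroup.hom_ext fun e => ?_
    change χ' (elemHom (b x) e) = _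
    rw [← hsum]
    exact hχ (elemHom x e)

theorem inj_nwfd {R : Type u} [Ring R] {n k : ℕ} (h : nwidLE R n k (ModuleCat.of R R))
    (E : ModuleCat.{u} Rᵐᵒᵖ) (hE : Module.Injective Rᵐᵒᵖ E) : nwfdLE R n k E := by
  intro K hK
  have hv := h K hK
  obtain ⟨G, d, π, hP, hF, hπ, h0, hd⟩ := special_res hK
  rw [resolution_of G d π hP hπ h0 hd] at hv
  refine (resolution_of G d π hP hπ h0 hd _ _).2 ?_
  have := hP (k + 1)
  have := hP (k + 2)
  have := hF (k + 1)
  have := hF (k + 2)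
  exact fun f hf => key hE (d (k + 1)) (d k) hv f hf

theorem injective_of_retract {S : Type u} [Ring S] {E N : Type u} [AddCommGroup E] [AddCommGroup N]
    [Module S E] [Module S N] (hE : Module.Injective S E) (i : N →ₗ[S] E) (r : E →ₗ[S] N)
    (h : ∀ x, r (i x) = x) : Module.Injective S N where
  out X Y _ _ _ _ j hj f := by
    obtain ⟨g, hg⟩ := hE.out j hj (i ∘ₗ f)
    exact ⟨r ∘ₗ g, fun x => by simp [hg, h]⟩

theorem exists_inj {S : Type u} [Ring S] (M : ModuleCat.{u} S) :
    ∃ (E : ModuleCat.{u} S) (ι : M →ₗ[S] E), Module.Injective S E ∧ Function.Injective ι :=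
  ⟨Injective.under M, (Injective.ι M).hom,
    (Module.injective_iff_injective_object S (Injective.under M : ModuleCat.{u} S)).2
      (inferInstanceAs (Injective (Injective.under M))),
    (ModuleCat.mono_iff_injective _).1 inferInstance⟩

/-- assume `n-wid(_R R) ≤ k` (and, as in the context, that every right
module has a `WF^n_k(R^op)`-cover).  A right module `M` is reduced and `(n,k)`-weak
cotorsion iff `M` is the kernel of a `WF^n_k(R^op)`-cover `φ : E → D` with `E`
injective. -/
theorem stmt10 (R : Type u) [Ring R] (n k : ℕ)
    (h : nwidLE R n k (ModuleCat.of R R))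
    (hcov : ∀ D : ModuleCat.{u} Rᵐᵒᵖ, ∃ (E : ModuleCat.{u} Rᵐᵒᵖ)
      (φ : E →ₗ[Rᵐᵒᵖ] D), IsCover Rᵐᵒᵖ (nwfdLE R n k) E D φ)
    (M : ModuleCat.{u} Rᵐᵒᵖ) :
    (IsReducedModule Rᵐᵒᵖ M ∧ IsNKWeakCotorsion R n k M) ↔
      ∃ (E D : ModuleCat.{u} Rᵐᵒᵖ) (φ : E →ₗ[Rᵐᵒᵖ] D),
        Module.Injective Rᵐᵒᵖ E ∧ IsCover Rᵐᵒᵖ (nwfdLE R n k) E D φ ∧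
        Nonempty ((M : Type u) ≃ₗ[Rᵐᵒᵖ] LinearMap.ker φ) := by
  constructor
  · rintro ⟨hred, hcot⟩
    obtain ⟨E, ι, hE, hι⟩ := exists_inj M
    let D : ModuleCat.{u} Rᵐᵒᵖ := ModuleCat.of Rᵐᵒᵖ (E ⧸ LinearMap.range ι)
    let ψ : E →ₗ[Rᵐᵒᵖ] D := (LinearMap.range ι).mkQ
    have hψ : Function.Surjective ψ := Submodule.mkQ_surjective _
    have hkerψ : LinearMap.ker ψ = LinearMap.range ι := Submodule.ker_mkQ _
    have hex : Function.Exact ι ψ := LinearMap.exact_iff.2 hkerψ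
    have hWE := inj_nwfd h E hE
    have hlift : ∀ F : ModuleCat.{u} Rᵐᵒᵖ, nwfdLE R n k F → ∀ g : F →ₗ[Rᵐᵒᵖ] D,
        ∃ h : F →ₗ[Rᵐᵒᵖ] E, ψ ∘ₗ h = g := fun F hF g =>
      ext1_lift (hcot F hF) ι ψ hι hψ hex g
    obtain ⟨N, φ, ⟨hN, hφ⟩, hcv⟩ := hcov D
    obtain ⟨f, hf⟩ := hφ E hWE ψ
    obtain ⟨g, hg⟩ := hlift N hN φ
    have hb : Function.Bijective (f ∘ₗ g) := hcv (f ∘ₗ g) (by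
      rw [← LinearMap.comp_assoc, hf, hg])
    let w := LinearEquiv.ofBijective (f ∘ₗ g) hb
    have hw : ∀ y, f (g (w.symm y)) = y := fun y => w.apply_symm_apply y
    have hfs : Function.Surjective f := fun y => ⟨_, hw y⟩
    let r0 : E →ₗ[Rᵐᵒᵖ] E := LinearMap.id - g ∘ₗ w.symm.toLinearMap ∘ₗ f
    have hr0 : ∀ x, r0 x ∈ LinearMap.ker f := fun x => by simp [r0, hw]
    have hfψ : ∀ x, φ (f x) = ψ x := fun x => DFunLike.congr_fun hf x
    -- the kernel of `f` transported to `M`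
    let N' : Submodule Rᵐᵒᵖ M := (LinearMap.ker f).comap ι
    have hN' : ∀ x, r0 x ∈ LinearMap.range ι := fun x => by
      rw [← hkerψ, LinearMap.mem_ker, ← hfψ, LinearMap.mem_ker.1 (hr0 x), map_zero]
    let e := LinearEquiv.ofInjective ι hι
    let r1 : E →ₗ[Rᵐᵒᵖ] M := e.symm.toLinearMap ∘ₗ r0.codRestrict _ hN'
    have hr1 : ∀ x, ι (r1 x) = r0 x := fun x => by
      have : e (r1 x) = r0.codRestrict _ hN' x := by simp [r1]
      exact congrArg Subtype.val this
    have hinj : Module.Injective Rᵐᵒᵖ N' := injective_of_retract hE (ι ∘ₗ N'.subtype)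
      (r1.codRestrict N' (fun x => by
        change ι (r1 x) ∈ LinearMap.ker f
        rw [hr1]; exact hr0 x)) (by
      intro x
      ext
      apply hι
      have hx : f (ι x) = 0 := x.2
      simp [hr1, r0, hx])
    have hbot := hred N' hinj
    have hfi : Function.Injective f := by
      rw [← LinearMap.ker_eq_bot, LinearMap.ker_eq_bot']
      intro x hx
      have : x ∈ LinearMap.range ι := by
        rw [← hkerψ, LinearMap.mem_ker, ← hfψ, hx, map_zero]
      obtain ⟨y, rfl⟩ := this
      have : y ∈ N' := hx
      rw [hbot, Submodule.mem_bot] at this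
      rw [this, map_zero]
    let v := LinearEquiv.ofBijective f ⟨hfi, hfs⟩
    refine ⟨E, D, ψ, hE, ⟨⟨hWE, hlift⟩, ?_⟩, ⟨e.trans (LinearEquiv.ofEq _ _ hkerψ.symm)⟩⟩
    intro t ht
    have hb2 := hcv (v.toLinearMap ∘ₗ t ∘ₗ v.symm.toLinearMap) (by
      ext y
      obtain ⟨x, rfl⟩ := v.surjective y
      have h1 : ψ (t x) = ψ x := DFunLike.congr_fun ht x
      have h2 : ∀ x, φ (v x) = ψ x := hfψ
      simp [h1, h2])
    have : (t : E → E) = v.symm ∘ (v.toLinearMap ∘ₗ t ∘ₗ v.symm.toLinearMap) ∘ v := by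
      ext x; simp
    rw [this]
    exact v.symm.bijective.comp (hb2.comp v.bijective)
  · rintro ⟨E, D, φ, hE, ⟨⟨hWE, hpre⟩, hcv⟩, ⟨e⟩⟩
    refine ⟨?_, fun F hF => ext1_of hE φ e (hpre F hF)⟩
    intro N hN
    obtain ⟨r, hr⟩ := exists_factor (Module.Baer.of_injective hN)
      ((LinearMap.ker φ).subtype ∘ₗ e.toLinearMap ∘ₗ N.subtype) LinearMap.id (by
        intro x hx
        simpa using hx)
    have hr' : ∀ x : N, r (e x : E) = x := fun x => DFunLike.congr_fun hr x
    have hb := hcv (LinearMap.id - (LinearMap.ker φ).subtype ∘ₗ e.toLinearMap ∘ₗ N.subtype ∘ₗ r) (by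
      ext x
      have := (e (r x : M)).2
      rw [LinearMap.mem_ker] at this
      simp [this])
    rw [Submodule.eq_bot_iff]
    intro x hx
    have h1 : (e x : E) = 0 := by
      apply hb.1
      have := hr' ⟨x, hx⟩
      simp at this
      simp [this]
    simpa using h1
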